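/- Let T ⊂ ℂ be the tripod: the union of the three segments joining 0 to the three cube roots of unity, i.e. T = {t•ζ : t ∈ [0,1], ζ³ = 1}. For every natural number m, there is no continuous injective map from T × D^m into the unit sphere S^{m+1} = Metric.sphere 0 1 of EuclideanSpace ℝ (Fin (m+2)), where D^m is the closed unit ball in EuclideanSpace ℝ (Fin m). In other words, no point of the sphere S^{m+1} is (m+1)-branching. -/

import Mathlib

/-- The tripod: the union of the three segments in `ℂ` joining `0` to the three cube
roots of unity. -/
def tripod : Set ℂ := {z : ℂ | ∃ t ∈ Set.Icc (0 : ℝ) 1, ∃ ζ : ℂ, ζ ^ 3 = 1 ∧ z = t • ζ}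

/-!
Two legs of the tripod form an arc, so the interior of their product with the disc is a copy of
`ℝ^{m+1}`. By invariance of domain, an injective continuous map into an `(m+1)`-manifold sends it
onto an open set, so this copy would be open in `T × Dᵐ`; but the third leg leads from outside the
copy to a point of it.

Invariance of domain is deduced from Brouwer's fixed point theorem by Kulpa's argument, and
Brouwer's theorem from the absence of a smooth retraction `r` of the ball onto its sphere, in the
manner of Milnor and Rogers: the map `x ↦ x + t (r x - x)` preserves the volume of the ball for
small `t`, so the integral of its Jacobian determinant, a polynomial in `t`, is constant and
nonzero; but at `t = 1` this determinant vanishes.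
-/

open Set Metric MeasureTheory Module Topology Function
open scoped NNReal RealInnerProductSpace

section Determinant

lemma exists_polynomial_eval_eq_det_one_add_smul {𝕜 V : Type*} [Field 𝕜] [AddCommGroup V]
    [Module 𝕜 V] [FiniteDimensional 𝕜 V] (A : V →ₗ[𝕜] V) :
    ∃ p : Polynomial 𝕜, p.natDegree ≤ finrank 𝕜 V ∧ ∀ t, p.eval t = (1 + t • A).det := by
  classical
  let b := finBasis 𝕜 V
  let M := LinearMap.toMatrix b b A
  refine ⟨Matrix.det ((Polynomial.X : Polynomial 𝕜) • M.map Polynomial.C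
    + (1 : Matrix _ _ 𝕜).map Polynomial.C), ?_, fun t => ?_⟩
  · simpa only [Fintype.card_fin] using Polynomial.natDegree_det_X_add_C_le M 1
  · rw [← LinearMap.det_toMatrix b, ← Polynomial.coe_evalRingHom, RingHom.map_det]
    congr 1
    ext i j
    rcases eq_or_ne i j with rfl | hij
    · simp [M]; ring
    · simp [M, Matrix.one_apply_ne hij]; ring

lemma det_one_add_smul_eq_sum_lagrange {𝕜 V : Type*} [Field 𝕜] [DecidableEq 𝕜] [AddCommGroup V]
    [Module 𝕜 V] [FiniteDimensional 𝕜 V] (A : V →ₗ[𝕜] V) {s : Finset 𝕜}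
    (hs : finrank 𝕜 V < s.card) (r : 𝕜) :
    (1 + r • A).det = ∑ t ∈ s, (Lagrange.basis s id t).eval r * (1 + t • A).det := by
  obtain ⟨p, hp, hpA⟩ := exists_polynomial_eval_eq_det_one_add_smul A
  have hdeg : p.degree < s.card :=
    Polynomial.degree_le_natDegree.trans_lt (by exact_mod_cast hp.trans_lt hs)
  rw [← hpA, Lagrange.eq_interpolate injective_id.injOn hdeg, Lagrange.interpolate_apply,
    Polynomial.eval_finsetSum]
  refine Finset.sum_congr rfl fun t _ => ?_
  rw [Polynomial.eval_mul, Polynomial.eval_C, id, hpA, mul_comm]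

lemma det_one_add_pos_of_norm_lt_one {E : Type*} [NormedAddCommGroup E] [NormedSpace ℝ E]
    [CompleteSpace E] {A : E →L[ℝ] E} (hA : ‖A‖ < 1) : 0 < (1 + A).det := by
  by_contra! hneg
  have hcont : ContinuousOn (fun s : ℝ => (1 + s • A).det) (Icc 0 1) :=
    (ContinuousLinearMap.continuous_det.comp (by fun_prop)).continuousOn
  obtain ⟨s, hs, hdet⟩ : (0 : ℝ) ∈ (fun s : ℝ => (1 + s • A).det) '' Icc 0 1 :=
    intermediate_value_Icc' zero_le_one hcont
      ⟨by simpa using hneg, by simp [ContinuousLinearMap.det]⟩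
  have hnorm : ‖-(s • A)‖ < 1 := by
    rw [norm_neg, norm_smul, Real.norm_of_nonneg hs.1]
    exact (mul_le_of_le_one_left (norm_nonneg A) hs.2).trans_lt hA
  have hunit : IsUnit (1 + s • A) := by simpa using isUnit_one_sub_of_norm_lt_one hnorm
  have hunit' : IsUnit ((1 + s • A : E →L[ℝ] E) : E →ₗ[ℝ] E) :=
    hunit.map (ContinuousLinearMap.toLinearMapRingHom (R₁ := ℝ) (M₁ := E))
  exact (LinearMap.isUnit_det _ hunit').ne_zero hdet

lemma det_eq_zero_of_eventually_norm_eq {E : Type*} [NormedAddCommGroup E]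
    [InnerProductSpace ℝ E] [FiniteDimensional ℝ E] {r : E → E} {r' : E →L[ℝ] E} {x : E}
    (hr : HasFDerivAt r r' x) (hconst : ∀ᶠ y in 𝓝 x, ‖r y‖ = ‖r x‖) (hrx : r x ≠ 0) :
    r'.det = 0 := by
  by_contra hdet
  obtain ⟨v, hv⟩ : ∃ v, r' v = r x :=
    (LinearMap.equivOfDetNeZero (r' : E →ₗ[ℝ] E) hdet).surjective (r x)
  have hsq : (fun y => ‖r y‖ ^ 2) =ᶠ[𝓝 x] fun _ => ‖r x‖ ^ 2 := by
    filter_upwards [hconst] with y hy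
    rw [hy]
  have hderiv := hr.norm_sq.unique ((hasFDerivAt_const (‖r x‖ ^ 2) x).congr_of_eventuallyEq hsq)
  simpa [hv, hrx] using DFunLike.congr_fun hderiv v

end Determinant

section VolumePreservation

lemma inter_frontier_nonempty_of_isPreconnected {X : Type*} [TopologicalSpace X] {s t : Set X}
    (ht : IsPreconnected t) (hts : (t ∩ s).Nonempty) (htsc : (t ∩ sᶜ).Nonempty) :
    (t ∩ frontier s).Nonempty := by
  by_contra hempty
  have hcover : t ⊆ interior s ∪ interior sᶜ := fun x hx => by
    have hxs : x ∉ frontier s := fun h => hempty ⟨x, hx, h⟩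
    rwa [← mem_compl_iff, compl_frontier_eq_union_interior] at hxs
  have hdisj : Disjoint (interior s) (interior sᶜ) :=
    disjoint_compl_right.mono interior_subset interior_subset
  obtain ⟨x, hxt, hxs⟩ := hts
  obtain ⟨y, hyt, hys⟩ := htsc
  rcases ht.subset_or_subset isOpen_interior isOpen_interior hdisj hcover with h | h
  · exact hys (interior_subset (h hyt))
  · exact interior_subset (h hxt) hxs

lemma lipschitzWith_indicator_of_eqOn_frontier {E F : Type*} [NormedAddCommGroup E]
    [NormedSpace ℝ E] [PseudoMetricSpace F] [Zero F] {K : Set E} {h : E → F} {C : ℝ≥0}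
    (hK : IsClosed K) (hLip : LipschitzOnWith C h K) (hzero : EqOn h 0 (frontier K)) :
    LipschitzWith C (K.indicator h) := by
  have dist_le : ∀ x ∈ K, ∀ y ∉ K, dist (h x) 0 ≤ C * dist x y := by
    intro x hx y hy
    obtain ⟨z, hz, hzK⟩ := inter_frontier_nonempty_of_isPreconnected
      (convex_segment x y).isPreconnected ⟨x, left_mem_segment ℝ x y, hx⟩
      ⟨y, right_mem_segment ℝ x y, hy⟩
    calc dist (h x) 0 = dist (h x) (h z) := by rw [hzero hzK, Pi.zero_apply]
      _ ≤ C * dist x z := hLip.dist_le_mul x hx z (hK.frontier_subset hzK)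
      _ ≤ C * dist x y := by
        gcongr
        linarith [dist_add_dist_of_mem_segment hz, dist_nonneg (x := z) (y := y)]
  refine LipschitzWith.of_dist_le_mul fun x y => ?_
  by_cases hx : x ∈ K <;> by_cases hy : y ∈ K
  · simpa only [indicator_of_mem, hx, hy] using hLip.dist_le_mul x hx y hy
  · simpa only [indicator_of_mem hx, indicator_of_notMem hy] using dist_le x hx y hy
  · simpa only [indicator_of_mem hy, indicator_of_notMem hx, dist_comm] using dist_le y hy x hx
  · simpa only [indicator_of_notMem hx, indicator_of_notMem hy, dist_self] using by positivity

lemma bijective_add_of_contractingWith {E : Type*} [NormedAddCommGroup E] [CompleteSpace E]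
    {h : E → E} {C : ℝ≥0} (hh : ContractingWith C h) : Bijective fun x => x + h x := by
  have hcontr (y : E) : ContractingWith C fun x => y - h x :=
    ⟨hh.1, LipschitzWith.of_dist_le_mul fun a b => by
      rw [dist_sub_left]; exact hh.2.dist_le_mul a b⟩
  refine ⟨fun a b hab => (hcontr (a + h a)).fixedPoint_unique' ?_ ?_, fun y => ?_⟩
  · exact add_sub_cancel_right a (h a)
  · exact sub_eq_of_eq_add hab
  · exact ⟨(hcontr y).fixedPoint, (sub_eq_iff_eq_add.1 (hcontr y).fixedPoint_isFixedPt).symm⟩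

lemma bijOn_add_of_lipschitzOnWith {E : Type*} [NormedAddCommGroup E] [NormedSpace ℝ E]
    [CompleteSpace E] {K : Set E} {h : E → E} {C : ℝ≥0} (hK : IsClosed K) (hC : C < 1)
    (hLip : LipschitzOnWith C h K) (hzero : EqOn h 0 (frontier K)) :
    BijOn (fun x => x + h x) K K := by
  -- The extension of `h` by zero is a contraction, so it perturbs the identity to a bijection of
  -- `E`; this bijection is the identity off `K`, hence restricts to a bijection of `K`.
  have hbij := bijective_add_of_contractingWith
    ⟨hC, lipschitzWith_indicator_of_eqOn_frontier hK hLip hzero⟩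
  have heqOn : EqOn (fun x => x + K.indicator h x) (fun x => x + h x) K := fun x hx => by
    simp only [indicator_of_mem hx]
  have hcompl : (fun x => x + K.indicator h x) '' Kᶜ = Kᶜ := by
    refine (image_congr fun x hx => ?_).trans (image_id _)
    rw [indicator_of_notMem hx, add_zero, id]
  rw [image_compl_eq hbij, compl_inj_iff] at hcompl
  exact heqOn.bijOn_iff.1 ⟨mapsTo_iff_image_subset.2 hcompl.subset, hbij.1.injOn, hcompl.superset⟩

variable {E : Type*} [NormedAddCommGroup E] [NormedSpace ℝ E] [FiniteDimensional ℝ E]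
  [MeasurableSpace E] [BorelSpace E] (μ : Measure E) [μ.IsAddHaarMeasure]
  {K : Set E} {h : E → E} {h' : E → E →L[ℝ] E}

lemma setIntegral_det_one_add_of_nnnorm_le {C : ℝ≥0} (hK : IsClosed K) (hconv : Convex ℝ K)
    (hderiv : ∀ x ∈ K, HasFDerivWithinAt h (h' x) K x) (hC : C < 1) (hbound : ∀ x ∈ K, ‖h' x‖₊ ≤ C)
    (hzero : EqOn h 0 (frontier K)) : ∫ x in K, (1 + h' x).det ∂μ = μ.real K := by
  have hbij : BijOn (fun x => x + h x) K K := bijOn_add_of_lipschitzOnWith hK hC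
    (hconv.lipschitzOnWith_of_nnnorm_hasFDerivWithin_le hderiv hbound) hzero
  have hpos : ∀ x ∈ K, 0 < (1 + h' x).det := fun x hx =>
    det_one_add_pos_of_norm_lt_one ((hbound x hx).trans_lt hC)
  have hderiv' : ∀ x ∈ K, HasFDerivWithinAt (fun x => x + h x) (1 + h' x) K x :=
    fun x hx => (hasFDerivWithinAt_id x K).add (hderiv x hx)
  calc ∫ x in K, (1 + h' x).det ∂μ = ∫ x in K, |(1 + h' x).det| • (1 : ℝ) ∂μ :=
        setIntegral_congr_fun hK.measurableSet fun x hx => by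
          rw [abs_of_pos (hpos x hx), smul_eq_mul, mul_one]
    _ = ∫ _ in (fun x => x + h x) '' K, (1 : ℝ) ∂μ :=
        (integral_image_eq_integral_abs_det_fderiv_smul μ hK.measurableSet hderiv' hbij.injOn
          fun _ => (1 : ℝ)).symm
    _ = μ.real K := by rw [hbij.image_eq, setIntegral_one_eq_measureReal]

lemma setIntegral_det_one_add (hK : IsCompact K) (hconv : Convex ℝ K)
    (hderiv : ∀ x ∈ K, HasFDerivWithinAt h (h' x) K x) (hcont : ContinuousOn h' K)
    (hzero : EqOn h 0 (frontier K)) : ∫ x in K, (1 + h' x).det ∂μ = μ.real K := by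
  -- `∫ x in K, (1 + t • h' x).det` is a polynomial in `t` which is constant for small `t > 0`.
  classical
  obtain ⟨C, hC⟩ : ∃ C : ℝ≥0, ∀ x ∈ K, ‖h' x‖₊ ≤ C := by
    obtain ⟨C, hC⟩ := hK.exists_bound_of_continuousOn hcont
    exact ⟨C.toNNReal, fun x hx => NNReal.le_toNNReal_of_coe_le (hC x hx)⟩
  have hsmall : ∀ t ∈ Ioo (0 : ℝ) (C + 1)⁻¹,
      ∫ x in K, (1 + t • h' x).det ∂μ = μ.real K := by
    intro t ht
    have htC : t.toNNReal * C < 1 := by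
      rw [← NNReal.coe_lt_coe, NNReal.coe_mul, Real.coe_toNNReal t ht.1.le, NNReal.coe_one]
      have := (lt_inv_comm₀ ht.1 (by positivity)).1 ht.2
      have := mul_inv_cancel₀ ht.1.ne'
      nlinarith [ht.1]
    refine setIntegral_det_one_add_of_nnnorm_le μ hK.isClosed hconv
      (fun x hx => (hderiv x hx).const_smul t) htC (fun x hx => ?_)
      (fun x hx => by simp [hzero hx])
    rw [nnnorm_smul, Real.nnnorm_of_nonneg ht.1.le, ← Real.toNNReal_of_nonneg]
    gcongr
    exact hC x hx
  obtain ⟨s, hs, hcard⟩ := (Ioo_infinite (a := (0 : ℝ)) (b := (C + 1)⁻¹)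
    (by positivity)).exists_subset_card_eq (finrank ℝ E + 1)
  have hint (t : ℝ) : IntegrableOn (fun x => (1 + t • h' x).det) K μ :=
    (ContinuousLinearMap.continuous_det.comp_continuousOn (by fun_prop)).integrableOn_compact hK
  calc ∫ x in K, (1 + h' x).det ∂μ
      = ∫ x in K, ∑ t ∈ s, (Lagrange.basis s id t).eval 1 * (1 + t • h' x).det ∂μ := by
        congr with x
        have hinterp := det_one_add_smul_eq_sum_lagrange (h' x : E →ₗ[ℝ] E) (s := s) (by omega) 1
        rwa [one_smul] at hinterp
    _ = ∑ t ∈ s, (Lagrange.basis s id t).eval 1 * ∫ x in K, (1 + t • h' x).det ∂μ := by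
        rw [integral_finsetSum _ fun t _ => (hint t).const_mul _]
        simp only [integral_const_mul]
    _ = ∑ t ∈ s, (Lagrange.basis s id t).eval 1 * μ.real K :=
        Finset.sum_congr rfl fun t ht => by rw [hsmall t (hs ht)]
    _ = μ.real K := by
        rw [← Finset.sum_mul, ← Polynomial.eval_finsetSum,
          Lagrange.sum_basis injective_id.injOn (Finset.card_pos.1 (by omega)),
          Polynomial.eval_one, one_mul]

end VolumePreservation

section Brouwer

lemma exists_isFixedPt_of_forall_exists_dist_lt {X : Type*} [MetricSpace X] {K : Set X} {f : X → X}
    (hK : IsCompact K) (hf : ContinuousOn f K) (happrox : ∀ ε > 0, ∃ x ∈ K, dist (f x) x < ε) :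
    ∃ x ∈ K, IsFixedPt f x := by
  by_contra! hfix
  obtain ⟨δ, hδ, hle⟩ := hK.exists_forall_le' (f := fun x => dist (f x) x)
    (continuous_dist.comp_continuousOn (hf.prodMk continuousOn_id))
    fun x hx => dist_pos.2 (hfix x hx)
  obtain ⟨x, hx, hlt⟩ := happrox δ hδ
  exact hlt.not_ge (hle x hx)

variable {E : Type*} [NormedAddCommGroup E] [InnerProductSpace ℝ E]

lemma not_exists_contDiffAt_retraction_closedBall_sphere [FiniteDimensional ℝ E] :
    ¬ ∃ r : E → E, (∀ x ∈ closedBall 0 1, ContDiffAt ℝ 1 r x) ∧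
      MapsTo r (closedBall 0 1) (sphere 0 1) ∧ EqOn r id (sphere 0 1) := by
  rintro ⟨r, hr, hmaps, hid⟩
  borelize E
  let μ : Measure E := volume
  let B : Set E := closedBall 0 1
  have hnorm : ∀ x ∈ B, ‖r x‖ = 1 := fun x hx => mem_sphere_zero_iff_norm.1 (hmaps hx)
  have hderiv : ∀ x ∈ B, HasFDerivAt r (fderiv ℝ r x) x := fun x hx =>
    ((hr x hx).differentiableAt one_ne_zero).hasFDerivAt
  have hcont : ContinuousOn (fun x => fderiv ℝ r x - 1) B := fun x hx =>
    (((hr x hx).fderiv_right (m := 0) (by norm_num)).continuousAt.sub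
      continuousAt_const).continuousWithinAt
  have hvol : ∫ x in B, (fderiv ℝ r x).det ∂μ = μ.real B := by
    rw [← setIntegral_det_one_add μ (isCompact_closedBall 0 1) (convex_closedBall 0 1)
      (h' := fun x => fderiv ℝ r x - 1)
      (fun x hx => ((hderiv x hx).sub (hasFDerivAt_id x)).hasFDerivWithinAt) hcont]
    · simp only [add_sub_cancel, B]
    · rw [frontier_closedBall 0 one_ne_zero]
      exact fun x hx => sub_eq_zero.2 (hid hx)
  have hdet : ∀ x ∈ ball (0 : E) 1, (fderiv ℝ r x).det = 0 := by
    intro x hx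
    have hxB : x ∈ B := ball_subset_closedBall hx
    refine det_eq_zero_of_eventually_norm_eq (hderiv x hxB) ?_
      (norm_ne_zero_iff.1 (by rw [hnorm x hxB]; exact one_ne_zero))
    filter_upwards [isOpen_ball.mem_nhds hx] with y hy
    rw [hnorm x hxB, hnorm y (ball_subset_closedBall hy)]
  have hzero : ∫ x in B, (fderiv ℝ r x).det ∂μ = 0 := by
    have hball : ball (0 : E) 1 =ᵐ[μ] B := by
      rw [← interior_closedBall (0 : E) one_ne_zero]
      exact interior_ae_eq_of_null_frontier ((convex_closedBall 0 1).addHaar_frontier μ)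
    rw [← setIntegral_congr_set hball]
    exact setIntegral_eq_zero_of_forall_eq_zero hdet
  exact (ENNReal.toReal_pos (measure_closedBall_pos μ (0 : E) one_pos).ne'
    measure_closedBall_lt_top.ne).ne' (hvol.symm.trans hzero)

/-- The point where the ray from a point `x` of the closed unit ball in the direction `u` leaves
the ball: the coefficient of `u` is the larger root `τ` of the quadratic equation
`‖x + τ • u‖ ^ 2 = 1`. It is a junk value when `u = 0`. -/
noncomputable def rayExit (x u : E) : E :=
  x + ((√(⟪x, u⟫ ^ 2 + ‖u‖ ^ 2 * (1 - ‖x‖ ^ 2)) - ⟪x, u⟫) / ‖u‖ ^ 2) • u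

lemma norm_rayExit {x u : E} (hx : ‖x‖ ≤ 1) (hu : u ≠ 0) : ‖rayExit x u‖ = 1 := by
  have hdisc : 0 ≤ ⟪x, u⟫ ^ 2 + ‖u‖ ^ 2 * (1 - ‖x‖ ^ 2) := by
    have : 0 ≤ 1 - ‖x‖ ^ 2 := sub_nonneg.2 (pow_le_one₀ (norm_nonneg x) hx)
    positivity
  refine (pow_eq_one_iff_of_nonneg (norm_nonneg _) two_ne_zero).1 ?_
  rw [rayExit, norm_add_sq_real, inner_smul_right, norm_smul, mul_pow, Real.norm_eq_abs, sq_abs]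
  field_simp
  linear_combination Real.sq_sqrt hdisc

lemma rayExit_eq_self {x u : E} (hx : ‖x‖ = 1) (hxu : 0 ≤ ⟪x, u⟫) : rayExit x u = x := by
  simp [rayExit, hx, Real.sqrt_sq hxu]

lemma contDiffAt_rayExit {F : Type*} [NormedAddCommGroup F] [NormedSpace ℝ F] {n : WithTop ℕ∞}
    {f g : F → E} {y : F} (hf : ContDiffAt ℝ n f y) (hg : ContDiffAt ℝ n g y) (hgy : g y ≠ 0)
    (hfy : ‖f y‖ ≤ 1) (hfg : ‖f y‖ = 1 → 0 < ⟪f y, g y⟫) :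
    ContDiffAt ℝ n (fun z => rayExit (f z) (g z)) y := by
  have hdisc : 0 < ⟪f y, g y⟫ ^ 2 + ‖g y‖ ^ 2 * (1 - ‖f y‖ ^ 2) := by
    rcases hfy.lt_or_eq with hlt | heq
    · have : 0 < 1 - ‖f y‖ ^ 2 := sub_pos.2 (pow_lt_one₀ (norm_nonneg _) hlt two_ne_zero)
      positivity
    · have := hfg heq
      simp only [heq]
      positivity
  have hinner := hf.inner ℝ hg
  have hnorm := hg.norm_sq ℝ
  have hroot := ((hinner.pow 2).add (hnorm.mul (contDiffAt_const.sub (hf.norm_sq ℝ)))).sqrt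
    hdisc.ne'
  exact hf.add (((hroot.sub hinner).div hnorm (by positivity)).smul hg)

lemma inner_sub_pos_of_norm_le {x y : E} (hyx : ‖y‖ ≤ ‖x‖) (hne : y ≠ x) : 0 < ⟪x, x - y⟫ := by
  have hpos : 0 < ‖x - y‖ := norm_pos_iff.2 (sub_ne_zero.2 hne.symm)
  have hexpand := norm_sub_sq_real x y
  rw [inner_sub_right, real_inner_self_eq_norm_sq]
  nlinarith [norm_nonneg y]

variable [FiniteDimensional ℝ E]

lemma exists_isFixedPt_of_contDiff {f : E → E} (hf : ContDiff ℝ 1 f)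
    (hmaps : MapsTo f (closedBall 0 1) (closedBall 0 1)) :
    ∃ x ∈ closedBall (0 : E) 1, IsFixedPt f x := by
  by_contra! hfix
  have hnorm : ∀ x ∈ closedBall (0 : E) 1, ‖x‖ ≤ 1 := fun x => mem_closedBall_zero_iff.1
  have hinner : ∀ x ∈ closedBall (0 : E) 1, ‖x‖ = 1 → 0 < ⟪x, x - f x⟫ := fun x hx hx1 =>
    inner_sub_pos_of_norm_le (hx1 ▸ hnorm _ (hmaps hx)) (hfix x hx)
  have hne : ∀ x ∈ closedBall (0 : E) 1, x - f x ≠ 0 := fun x hx =>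
    sub_ne_zero.2 (Ne.symm (hfix x hx))
  refine not_exists_contDiffAt_retraction_closedBall_sphere
    ⟨fun x => rayExit x (x - f x), fun x hx => ?_, fun x hx => ?_, fun x hx => ?_⟩
  · exact contDiffAt_rayExit contDiffAt_id (contDiff_id.sub hf).contDiffAt (hne x hx) (hnorm x hx)
      (hinner x hx)
  · exact mem_sphere_zero_iff_norm.2 (norm_rayExit (hnorm x hx) (hne x hx))
  · exact rayExit_eq_self (mem_sphere_zero_iff_norm.1 hx)
      (hinner x (sphere_subset_closedBall hx) (mem_sphere_zero_iff_norm.1 hx)).le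

theorem brouwer_fixed_point {f : E → E} (hf : ContinuousOn f (closedBall 0 1))
    (hmaps : MapsTo f (closedBall 0 1) (closedBall 0 1)) :
    ∃ x ∈ closedBall (0 : E) 1, IsFixedPt f x := by
  refine exists_isFixedPt_of_forall_exists_dist_lt (isCompact_closedBall 0 1) hf fun ε hε => ?_
  obtain ⟨F, hF⟩ := ContinuousMap.exists_restrict_eq isClosed_closedBall ⟨_, hf.domRestrict⟩
  have hFf : EqOn F f (closedBall 0 1) := fun x hx => DFunLike.congr_fun hF ⟨x, hx⟩
  -- A smooth `η`-approximation of `f` maps the ball into the ball of radius `1 + η`.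
  let η := ε / 2
  have hη : 0 < η := by positivity
  obtain ⟨g, hg, hgF, -⟩ := F.continuous.exists_contDiff_approx 1 (ε := fun _ => η)
    continuous_const fun _ => hη
  have hgf : ∀ x ∈ closedBall (0 : E) 1, ‖g x - f x‖ < η := fun x hx => by
    simpa only [hFf hx, dist_eq_norm] using hgF x
  have hmaps' : MapsTo (fun x => (1 + η)⁻¹ • g x) (closedBall 0 1) (closedBall 0 1) := by
    intro x hx
    have hfx : ‖f x‖ ≤ 1 := mem_closedBall_zero_iff.1 (hmaps hx)
    rw [mem_closedBall_zero_iff, norm_smul, norm_inv, Real.norm_of_nonneg (by positivity),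
      inv_mul_le_one₀ (by positivity)]
    linarith [norm_le_norm_add_norm_sub' (g x) (f x), hgf x hx]
  obtain ⟨x, hx, hfix⟩ := exists_isFixedPt_of_contDiff (contDiff_const.smul hg) hmaps'
  have hgx : g x = x + η • x := by
    rw [(inv_smul_eq_iff₀ (by positivity)).1 hfix, add_smul, one_smul]
  refine ⟨x, hx, ?_⟩
  calc dist (f x) x = ‖η • x - (g x - f x)‖ := by rw [dist_eq_norm, hgx]; congr 1; abel
    _ ≤ ‖η • x‖ + ‖g x - f x‖ := norm_sub_le _ _
    _ ≤ η + ‖g x - f x‖ := by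
      gcongr
      rw [norm_smul, Real.norm_of_nonneg hη.le]
      exact mul_le_of_le_one_right hη.le (mem_closedBall_zero_iff.1 hx)
    _ < η + η := by gcongr; exact hgf x hx
    _ = ε := add_halves ε

end Brouwer

section InvarianceOfDomain

universe u v

lemma exists_eq_zero_of_norm_sub_le_one {E : Type*} [NormedAddCommGroup E] [InnerProductSpace ℝ E]
    [FiniteDimensional ℝ E] {g : E → E} (hg : ContinuousOn g (closedBall 0 1))
    (hle : ∀ x ∈ closedBall 0 1, ‖x - g x‖ ≤ 1) : ∃ x ∈ closedBall 0 1, g x = 0 := by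
  obtain ⟨x, hx, hfix⟩ := brouwer_fixed_point (continuousOn_id.sub hg)
    fun x hx => mem_closedBall_zero_iff.2 (hle x hx)
  exact ⟨x, hx, sub_eq_self.1 hfix⟩

lemma exists_continuous_leftInvOn {X : Type u} {Y : Type v} [TopologicalSpace X]
    [TopologicalSpace Y] [T2Space Y] [NormalSpace Y] [TietzeExtension.{v} X] {K : Set X} {f : X → Y}
    (hK : IsCompact K) (hf : ContinuousOn f K) (hinj : InjOn f K) :
    ∃ g : Y → X, Continuous g ∧ LeftInvOn g f K := by
  have : CompactSpace K := isCompact_iff_compactSpace.1 hK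
  have hemb : IsClosedEmbedding (K.domRestrict f) :=
    hf.domRestrict.isClosedEmbedding hinj.injective
  obtain ⟨g, hg⟩ := ContinuousMap.exists_extension hemb ⟨((↑) : K → X), continuous_subtype_val⟩
  exact ⟨g, g.continuous, fun x hx => DFunLike.congr_fun hg ⟨x, hx⟩⟩

variable {E : Type*} [NormedAddCommGroup E] [NormedSpace ℝ E]

lemma exists_continuous_dist_lt_ne_zero_of_measure_eq_zero [FiniteDimensional ℝ E]
    [MeasurableSpace E] [BorelSpace E] (μ : Measure E) [μ.IsAddHaarMeasure] {g : E → E}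
    (hg : Continuous g) {N : Set E} (hN : μ N = 0) {ε : ℝ} (hε : 0 < ε) :
    ∃ p : E → E, Continuous p ∧ (∀ y, dist (p y) (g y) < ε) ∧ ∀ y ∈ N, p y ≠ 0 := by
  obtain ⟨q, hq, hqg, -⟩ := hg.exists_contDiff_approx 1 (ε := fun _ => ε / 2)
    continuous_const fun _ => half_pos hε
  -- The image of `N` under the smooth map `q` is null, so `q` misses a small vector on `N`.
  have hnull : μ (q '' N) = 0 := addHaar_image_eq_zero_of_differentiableOn_of_addHaar_eq_zero μ
    (hq.differentiable one_ne_zero).differentiableOn hN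
  obtain ⟨w, hw, hwN⟩ : (ball 0 (ε / 2) \ q '' N).Nonempty :=
    nonempty_of_measure_ne_zero (μ := μ) <| by
      rw [measure_sdiff_null hnull]
      exact (measure_ball_pos μ 0 (half_pos hε)).ne'
  refine ⟨fun y => q y - w, hq.continuous.sub continuous_const, fun y => ?_, fun y hy h0 =>
    hwN ⟨y, hy, sub_eq_zero.1 h0⟩⟩
  calc dist (q y - w) (g y) ≤ dist (q y - w) (q y) + dist (q y) (g y) := dist_triangle _ _ _
    _ < ε / 2 + ε / 2 := by
      gcongr
      · simpa using hw
      · exact hqg y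
    _ = ε := add_halves ε

/-- The radial retraction of the space punctured at `c` onto the complement of the open ball of
radius `ε` around `c`: it pushes the punctured ball onto its boundary sphere and fixes every other
point. -/
noncomputable def pushOut (c : E) (ε : ℝ) (y : E) : E := c + max (ε / ‖y - c‖) 1 • (y - c)

lemma pushOut_eq_self {c y : E} {ε : ℝ} (hy : ε ≤ dist y c) : pushOut c ε y = y := by
  have : ε / ‖y - c‖ ≤ 1 := div_le_one_of_le₀ (by rwa [← dist_eq_norm]) (norm_nonneg _)
  rw [pushOut, max_eq_right this, one_smul, add_sub_cancel]

lemma pushOut_mem_sphere {c y : E} {ε : ℝ} (hy : dist y c ≤ ε) (hne : y ≠ c) :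
    pushOut c ε y ∈ sphere c ε := by
  have hpos : 0 < ‖y - c‖ := norm_pos_iff.2 (sub_ne_zero.2 hne)
  rw [dist_eq_norm] at hy
  have hone : 1 ≤ ε / ‖y - c‖ := (one_le_div hpos).2 hy
  rw [mem_sphere_iff_norm, pushOut, add_sub_cancel_left, max_eq_left hone, norm_smul,
    Real.norm_of_nonneg (zero_le_one.trans hone), div_mul_cancel₀ _ hpos.ne']

lemma continuousOn_pushOut (c : E) (ε : ℝ) : ContinuousOn (pushOut c ε) {c}ᶜ := by
  have hne : ∀ y ∈ ({c}ᶜ : Set E), ‖y - c‖ ≠ 0 := fun y hy =>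
    norm_ne_zero_iff.2 (sub_ne_zero.2 hy)
  unfold pushOut
  fun_prop (disch := assumption)

lemma exists_continuousOn_ne_zero_norm_sub_le [FiniteDimensional ℝ E] {K : Set E} {g : E → E}
    {c : E} {ε η : ℝ} (hK : IsCompact K) (hg : Continuous g) (hc : c ∉ K) (hε : 0 < ε)
    (hη : 0 < η) (hsmall : ∀ y ∈ closedBall c ε, ‖g y‖ ≤ η) (hne : ∀ y ∈ K \ ball c ε, g y ≠ 0) :
    ∃ p : E → E, ContinuousOn p K ∧ (∀ y ∈ K, p y ≠ 0) ∧ ∀ y ∈ K, ‖p y - g y‖ ≤ 3 * η := by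
  borelize E
  obtain ⟨δ, hδ, hδg⟩ : ∃ δ > 0, ∀ y ∈ K \ ball c ε, δ ≤ ‖g y‖ :=
    (hK.diff isOpen_ball).exists_forall_le' hg.norm.continuousOn
      fun y hy => norm_pos_iff.2 (hne y hy)
  -- Perturb `g` to a map without zeros on the null set `sphere c ε`, and use its values on that
  -- sphere to redefine `g` on the punctured ball.
  obtain ⟨q, hq, hqg, hq0⟩ := exists_continuous_dist_lt_ne_zero_of_measure_eq_zero
    (Measure.addHaar : Measure E) hg (Measure.addHaar_sphere_of_ne_zero _ c hε.ne') (lt_min hδ hη)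
  have hKc : ∀ y ∈ K, y ≠ c := fun y hy h => hc (h ▸ hy)
  refine ⟨q ∘ pushOut c ε, hq.comp_continuousOn ((continuousOn_pushOut c ε).mono hKc),
    fun y hy => ?_, fun y hy => ?_⟩ <;> rcases lt_or_ge (dist y c) ε with hlt | hge
  · exact hq0 _ (pushOut_mem_sphere hlt.le (hKc y hy))
  · intro h0
    rw [comp_apply, pushOut_eq_self hge] at h0
    have hlt : ‖g y‖ < δ := by
      simpa only [h0, dist_zero_left] using (hqg y).trans_le (min_le_left δ η)
    exact hlt.not_ge (hδg y ⟨hy, fun h => hge.not_gt h⟩)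
  · have hz : pushOut c ε y ∈ closedBall c ε :=
      sphere_subset_closedBall (pushOut_mem_sphere hlt.le (hKc y hy))
    have hqη := (hqg (pushOut c ε y)).trans_le (min_le_right δ η)
    rw [comp_apply, ← dist_eq_norm]
    calc dist (q (pushOut c ε y)) (g y)
        ≤ dist (q (pushOut c ε y)) (g (pushOut c ε y)) + dist (g (pushOut c ε y)) (g y) :=
          dist_triangle _ _ _
      _ ≤ η + (‖g (pushOut c ε y)‖ + ‖g y‖) := by
          gcongr
          exact dist_le_norm_add_norm _ _
      _ ≤ η + (η + η) := by
          gcongr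
          · exact hsmall _ hz
          · exact hsmall _ hlt.le
      _ = 3 * η := by ring
  · rw [comp_apply, pushOut_eq_self hge, ← dist_eq_norm]
    linarith [(hqg y).trans_le (min_le_right δ η)]

lemma image_closedBall_mem_nhds {E : Type*} [NormedAddCommGroup E] [InnerProductSpace ℝ E]
    [FiniteDimensional ℝ E] {f : E → E} (hf : ContinuousOn f (closedBall 0 1))
    (hinj : InjOn f (closedBall 0 1)) : f '' closedBall 0 1 ∈ 𝓝 (f 0) := by
  -- Kulpa's argument: otherwise a left inverse `g` of `f`, perturbed near `f 0`, would have no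
  -- zero on the image of the ball, although composing it with `f` moves each point by at most `1`.
  by_contra hmem
  have hB := isCompact_closedBall (0 : E) 1
  obtain ⟨g, hg, hgf⟩ := exists_continuous_leftInvOn hB hf hinj
  have h0B : (0 : E) ∈ closedBall 0 1 := mem_closedBall_self zero_le_one
  have hg0 : g (f 0) = 0 := hgf h0B
  obtain ⟨ρ, hρ, hsmall⟩ : ∃ ρ > 0, ∀ y, dist y (f 0) < ρ → ‖g y‖ < 1 / 3 := by
    simpa [hg0] using Metric.continuous_iff.1 hg (f 0) (1 / 3) (by norm_num)
  obtain ⟨c, hcρ, hcK⟩ : ∃ c ∈ ball (f 0) (ρ / 2), c ∉ f '' closedBall 0 1 := by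
    by_contra! hsub
    exact hmem (Filter.mem_of_superset (ball_mem_nhds _ (half_pos hρ)) hsub)
  have hne : ∀ y ∈ f '' closedBall 0 1 \ ball c (ρ / 2), g y ≠ 0 := by
    rintro _ ⟨⟨x, hx, rfl⟩, hfar⟩ h0
    rw [hgf hx] at h0
    exact hfar (h0 ▸ mem_ball_comm.1 hcρ)
  have hsmall' : ∀ y ∈ closedBall c (ρ / 2), ‖g y‖ ≤ 1 / 3 := fun y hy =>
    (hsmall y (by linarith [dist_triangle y c (f 0), mem_closedBall.1 hy, mem_ball.1 hcρ])).le
  obtain ⟨p, hp, hp0, hpg⟩ := exists_continuousOn_ne_zero_norm_sub_le (hB.image_of_continuousOn hf)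
    hg hcK (half_pos hρ) (by norm_num) hsmall' hne
  obtain ⟨x, hx, hpx⟩ := exists_eq_zero_of_norm_sub_le_one (g := p ∘ f)
    (hp.comp hf (mapsTo_image f _)) fun x hx => by
      have := hpg _ (mem_image_of_mem f hx)
      rwa [hgf hx, norm_sub_rev, mul_one_div_cancel three_ne_zero] at this
  exact hp0 _ (mem_image_of_mem f hx) hpx

variable {F : Type*} [NormedAddCommGroup F] [NormedSpace ℝ F] [FiniteDimensional ℝ E]
  [FiniteDimensional ℝ F]

theorem image_mem_nhds_of_continuousOn_injOn (hEF : finrank ℝ E = finrank ℝ F) {f : E → F}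
    {s : Set E} {x : E} (hs : s ∈ 𝓝 x) (hf : ContinuousOn f s) (hinj : InjOn f s) :
    f '' s ∈ 𝓝 (f x) := by
  let V := EuclideanSpace ℝ (Fin (finrank ℝ E))
  let e₁ : V ≃L[ℝ] E := ContinuousLinearEquiv.ofFinrankEq (by simp [V])
  let e₂ : F ≃L[ℝ] V := ContinuousLinearEquiv.ofFinrankEq (by simp [V, hEF])
  have hcont : Continuous fun p : ℝ × V => x + p.1 • e₁ p.2 := by fun_prop
  obtain ⟨r, hr, hrs⟩ : ∃ r > (0 : ℝ), MapsTo (fun z => x + r • e₁ z) (closedBall 0 1) s := by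
    have hev : ∀ᶠ r in 𝓝 (0 : ℝ), ∀ z ∈ closedBall (0 : V) 1, x + r • e₁ z ∈ s :=
      (isCompact_closedBall 0 1).eventually_forall_of_forall_eventually fun z _ => by
        refine hcont.tendsto (0, z) ?_
        simpa using hs
    obtain ⟨r, hr, hr0⟩ := ((hev.filter_mono nhdsWithin_le_nhds).and
      (self_mem_nhdsWithin : ∀ᶠ r in 𝓝[>] (0 : ℝ), r ∈ Ioi 0)).exists
    exact ⟨r, hr0, hr⟩
  have hinj₁ : Injective fun z => x + r • e₁ z := (add_right_injective x).comp
    ((smul_right_injective E hr.ne').comp e₁.injective)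
  have hnhds := image_closedBall_mem_nhds (f := fun z => e₂ (f (x + r • e₁ z)))
    (e₂.continuous.comp_continuousOn (hf.comp (by fun_prop) hrs))
    (e₂.injective.comp_injOn (hinj.comp hinj₁.injOn hrs))
  have hpre := e₂.continuous.continuousAt.preimage_mem_nhds (x := f x) (by simpa using hnhds)
  refine Filter.mem_of_superset hpre ?_
  rintro y ⟨z, hz, hzy⟩
  exact ⟨_, hrs hz, e₂.injective hzy⟩

theorem isOpenMap_of_continuous_of_injective {M : Type*} [TopologicalSpace M] [ChartedSpace F M]
    (hEF : finrank ℝ E = finrank ℝ F) {f : E → M} (hf : Continuous f) (hinj : Injective f) :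
    IsOpenMap f := by
  refine isOpenMap_iff_nhds_le.2 fun x => Filter.le_map fun s hs => ?_
  let φ := chartAt F (f x)
  let t := s ∩ f ⁻¹' φ.source
  have hx : f x ∈ φ.source := mem_chart_source F (f x)
  have ht : t ∈ 𝓝 x := Filter.inter_mem hs (hf.continuousAt (φ.open_source.mem_nhds hx))
  have hnhds : φ ∘ f '' t ∈ 𝓝 (φ (f x)) := image_mem_nhds_of_continuousOn_injOn hEF ht
    (φ.continuousOn.comp hf.continuousOn fun y hy => hy.2)
    (φ.injOn.comp hinj.injOn fun y hy => hy.2)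
  filter_upwards [φ.continuousAt hx hnhds, φ.open_source.mem_nhds hx] with y ⟨z, hz, hzy⟩ hy
  exact ⟨z, hz.1, φ.injOn hz.2 hy hzy⟩

end InvarianceOfDomain

section Tripod

/-- The two legs of the tripod through the primitive cube roots of unity, parametrized by `[-1, 1]`
and prolonged to an embedded copy of the real line. -/
noncomputable def twoLegs (s : ℝ) : ℂ := ⟨-|s| / 2, √3 / 2 * s⟩

lemma continuous_twoLegs : Continuous twoLegs :=
  Complex.equivRealProdCLM.symm.continuous.comp
    (f := fun s : ℝ => (-|s| / 2, √3 / 2 * s)) (by fun_prop)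

lemma twoLegs_zero : twoLegs 0 = 0 := by
  apply Complex.ext <;> simp [twoLegs]

lemma twoLegs_injective : Injective twoLegs := fun _ _ h =>
  mul_left_cancel₀ (by positivity) (congrArg Complex.im h)

lemma ofReal_ne_twoLegs {t : ℝ} (ht : 0 < t) (s : ℝ) : (t : ℂ) ≠ twoLegs s := fun h => by
  have hre : t = -|s| / 2 := congrArg Complex.re h
  linarith [abs_nonneg s]

lemma ofReal_mem_tripod {t : ℝ} (ht : t ∈ Icc 0 1) : (t : ℂ) ∈ tripod :=
  ⟨t, ht, 1, one_pow 3, by simp⟩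

lemma mk_pow_three_eq_one {a : ℝ} (ha : a ^ 2 = 3) : (⟨-1 / 2, a / 2⟩ : ℂ) ^ 3 = 1 := by
  apply Complex.ext <;> simp [pow_three] <;> grind

lemma twoLegs_mem_tripod {s : ℝ} (hs : |s| ≤ 1) : twoLegs s ∈ tripod := by
  have hroot : √3 ^ 2 = (3 : ℝ) := Real.sq_sqrt zero_le_three
  rcases abs_cases s with ⟨habs, -⟩ | ⟨habs, -⟩
  · refine ⟨|s|, ⟨abs_nonneg s, hs⟩, _, mk_pow_three_eq_one hroot, ?_⟩
    apply Complex.ext <;> simp [twoLegs, habs] <;> ring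
  · refine ⟨|s|, ⟨abs_nonneg s, hs⟩, _, mk_pow_three_eq_one ((neg_sq _).trans hroot), ?_⟩
    apply Complex.ext <;> simp [twoLegs, habs] <;> ring

variable {E : Type*} [NormedAddCommGroup E] [NormedSpace ℝ E]

/-- The two-legged part of `T × D`, where `D` is the closed unit ball of `E`, shorn of its boundary
and parametrized by `ℝ × E`. -/
noncomputable def sheet (x : ℝ × E) : tripod × closedBall (0 : E) 1 :=
  (⟨twoLegs (Homeomorph.unitBall x.1),
    twoLegs_mem_tripod (mem_ball_zero_iff.1 (Homeomorph.unitBall x.1).2).le⟩,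
    inclusion ball_subset_closedBall (Homeomorph.unitBall x.2))

lemma continuous_sheet : Continuous (sheet : ℝ × E → _) := by
  have := continuous_twoLegs
  have := continuous_inclusion (ball_subset_closedBall (x := (0 : E)) (ε := 1))
  unfold sheet
  fun_prop

lemma sheet_injective : Injective (sheet : ℝ × E → _) := by
  rintro ⟨s, v⟩ ⟨s', v'⟩ h
  obtain ⟨hs, hv⟩ := Prod.ext_iff.1 h
  have hs' := twoLegs_injective (congrArg Subtype.val hs)
  exact Prod.ext (Homeomorph.unitBall.injective (Subtype.ext hs'))
    (Homeomorph.unitBall.injective (inclusion_injective ball_subset_closedBall hv))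

lemma not_isOpen_range_sheet : ¬ IsOpen (range (sheet : ℝ × E → _)) := by
  intro hopen
  let leg (t : unitInterval) : tripod × closedBall (0 : E) 1 :=
    (⟨(t : ℝ), ofReal_mem_tripod t.2⟩, ⟨0, mem_closedBall_self zero_le_one⟩)
  have hleg : Continuous leg := by fun_prop
  have hpre : leg ⁻¹' range sheet = {0} := by
    ext t
    refine ⟨fun ⟨x, hx⟩ => ?_, ?_⟩
    · by_contra ht
      exact ofReal_ne_twoLegs (unitInterval.pos_iff_ne_zero.2 ht) _
        (congrArg (fun y => (y.1 : ℂ)) hx).symm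
    · rintro rfl
      exact ⟨0, by ext <;> simp [leg, sheet, twoLegs_zero]⟩
  have hclopen : IsClopen ({0} : Set unitInterval) :=
    ⟨isClosed_singleton, hpre ▸ hopen.preimage hleg⟩
  have hmem : (1 : unitInterval) ∈ ({0} : Set unitInterval) :=
    hclopen.eq_univ (singleton_nonempty 0) ▸ mem_univ _
  exact one_ne_zero hmem

theorem no_injective_tripod_map_into_sphere_general [FiniteDimensional ℝ E] {F M : Type*}
    [NormedAddCommGroup F] [NormedSpace ℝ F] [TopologicalSpace M] [ChartedSpace F M]
    (hEF : finrank ℝ F = finrank ℝ E + 1) :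
    ¬ ∃ f : tripod × closedBall (0 : E) 1 → M, Continuous f ∧ Injective f := by
  rintro ⟨f, hf, hinj⟩
  have : FiniteDimensional ℝ F := .of_finrank_pos (by omega)
  have hfinrank : finrank ℝ (ℝ × E) = finrank ℝ F := by
    rw [finrank_prod, finrank_self, hEF, add_comm]
  have hopen : IsOpen (range (f ∘ sheet)) := (isOpenMap_of_continuous_of_injective hfinrank
    (hf.comp continuous_sheet) (hinj.comp sheet_injective)).isOpen_range
  rw [range_comp] at hopen
  apply not_isOpen_range_sheet (E := E)
  rw [← preimage_image_eq (range sheet) hinj]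
  exact hopen.preimage hf

end Tripod

/-- The sphere `S^{m+1}` contains no `(m+1)`-branching point: there is no continuous
injective map from `T × Dᵐ` (the `(m+1)`-dimensional tripod) into the unit sphere of
`EuclideanSpace ℝ (Fin (m+2))`. -/
theorem no_injective_tripod_map_into_sphere (m : ℕ) :
    ¬ ∃ f : tripod × Metric.closedBall (0 : EuclideanSpace ℝ (Fin m)) 1 →
        Metric.sphere (0 : EuclideanSpace ℝ (Fin (m + 2))) 1,
      Continuous f ∧ Function.Injective f :=
  no_injective_tripod_map_into_sphere_general (F := EuclideanSpace ℝ (Fin (m + 1))) (by simp)
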